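/- For all indices i, j ∈ {1,2,3} and every point (r,v) of phase space with A(r,v) ≠ 0, the components of the LRL direction vector Poisson-commute with one another: {Θ_i, Θ_j}(r,v) = 0. -/

import Mathlib

/-!
Fix a point `p = (r, v)` and write `A` for the LRL vector. The differential of `a ↦ a / ‖a‖` at
`A(p)` is `‖A(p)‖⁻¹ P`, with `P` the orthogonal projection onto the orthogonal complement of `A(p)`.
Since `P` is self-adjoint, the gradient of `⟪x, Θ⟫` at `p` is `‖A(p)‖⁻¹` times that of
`⟪P x, A⟫`, with `P x` held constant, so that
`{⟪x, Θ⟫, ⟪y, Θ⟫}(p) = ‖A(p)‖⁻² {⟪P x, A⟫, ⟪P y, A⟫}(p)`.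
Now `{⟪x, A⟫, ⟪y, A⟫} = -2 (‖v‖² / 2 - κ / ‖r‖) (⟪x, r⟫ ⟪y, v⟫ - ⟪y, r⟫ ⟪x, v⟫)`: minus twice the
energy, times a 2 × 2 determinant that vanishes for `x` and `y` orthogonal to a nonzero vector in
the span of `r` and `v`, such as `A(p)`. Written as `A = (‖v‖² - κ / ‖r‖) r - ⟪r, v⟫ v`, the LRL
vector makes sense in every real Hilbert space, and so does this argument.
-/

noncomputable section

/-- Physical 3-space. -/
abbrev E3 : Type := EuclideanSpace ℝ (Fin 3)

/-- Build a vector in `E3` from its components. -/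
def toE3 (f : Fin 3 → ℝ) : E3 := (EuclideanSpace.equiv (Fin 3) ℝ).symm f

/-- Cross product in `ℝ³`. -/
def cross (a b : E3) : E3 :=
  toE3 ![a 1 * b 2 - a 2 * b 1, a 2 * b 0 - a 0 * b 2, a 0 * b 1 - a 1 * b 0]

/-- Dot product in `ℝ³`. -/
def dot (a b : E3) : ℝ := ∑ i, a i * b i

/-- Gradient in the `r` variable of a function on phase space. -/
def gradR (F : E3 × E3 → ℝ) (p : E3 × E3) : E3 := gradient (fun x => F (x, p.2)) p.1

/-- Gradient in the `v` variable of a function on phase space. -/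
def gradV (F : E3 × E3 → ℝ) (p : E3 × E3) : E3 := gradient (fun y => F (p.1, y)) p.2

/-- Poisson bracket of two functions on phase space. -/
def pb (F G : E3 × E3 → ℝ) (p : E3 × E3) : ℝ :=
  dot (gradR F p) (gradV G p) - dot (gradR G p) (gradV F p)

/-- Energy `E(r,v) = (1/2)‖v‖² − κ/‖r‖`. -/
def energy (κ : ℝ) (p : E3 × E3) : ℝ := (1/2) * ‖p.2‖^2 - κ / ‖p.1‖

/-- Angular momentum `L(r,v) = r × v`. -/
def angMom (p : E3 × E3) : E3 := cross p.1 p.2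

/-- Laplace–Runge–Lenz vector `A(r,v) = v × L − κ r/‖r‖`. -/
def lrl (κ : ℝ) (p : E3 × E3) : E3 := cross p.2 (angMom p) - (κ / ‖p.1‖) • p.1

/-- LRL direction vector `Θ = A/‖A‖`. -/
def lrlDir (κ : ℝ) (p : E3 × E3) : E3 := ‖lrl κ p‖⁻¹ • lrl κ p

/-- Levi-Civita symbol `ε_{ijk}` on indices in `{0,1,2}`. -/
def eps (i j k : Fin 3) : ℝ :=
  (((j : ℕ) : ℝ) - ((i : ℕ) : ℝ)) * (((k : ℕ) : ℝ) - ((i : ℕ) : ℝ))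
    * (((k : ℕ) : ℝ) - ((j : ℕ) : ℝ)) / 2

section InnerProductSpace

open NormedSpace
open scoped Gradient RealInnerProductSpace

variable {E F : Type*} [NormedAddCommGroup E] [InnerProductSpace ℝ E]
  [NormedAddCommGroup F] [InnerProductSpace ℝ F]

lemma hasFDerivAt_norm_inv {x : E} (hx : x ≠ 0) :
    HasFDerivAt (fun y : E => ‖y‖⁻¹) (-(‖x‖⁻¹ ^ 3) • innerSL ℝ x) x := by
  have hn : ‖x‖ ≠ 0 := norm_ne_zero_iff.mpr hx
  have hnorm := (hasStrictFDerivAt_norm_sq x).hasFDerivAt.sqrt (pow_ne_zero 2 hn)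
  simp only [Real.sqrt_sq (norm_nonneg _)] at hnorm
  refine ((hasDerivAt_inv hn).comp_hasFDerivAt x hnorm).congr_fderiv ?_
  ext h
  simp only [one_div, mul_inv_rev, neg_smul, neg_apply, smul_apply, coe_innerSL_apply,
    nsmul_eq_mul, Nat.cast_ofNat, smul_eq_mul, inv_pow, neg_inj]
  field_simp

lemma hasFDerivAt_normalize {x : E} (hx : x ≠ 0) :
    HasFDerivAt (normalize : E → E) (‖x‖⁻¹ • (ℝ ∙ x)ᗮ.starProjection) x := by
  refine ((hasFDerivAt_norm_inv hx).smul (hasFDerivAt_id x)).congr_fderiv ?_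
  ext h
  simp only [inv_pow, neg_smul, id_eq, add_apply, smul_apply, ContinuousLinearMap.id_apply,
    ContinuousLinearMap.smulRight_apply, neg_apply, coe_innerSL_apply, smul_eq_mul,
    Submodule.starProjection_orthogonal', sub_apply, one_apply_eq_self,
    Submodule.starProjection_singleton, Real.ringHom_apply]
  module

lemma inner_mul_inner_eq_of_mem_orthogonal {r v a x y : E} (ha : a ∈ Submodule.span ℝ {r, v})
    (h0 : a ≠ 0) (hx : x ∈ (ℝ ∙ a)ᗮ) (hy : y ∈ (ℝ ∙ a)ᗮ) :
    ⟪x, r⟫ * ⟪y, v⟫ = ⟪y, r⟫ * ⟪x, v⟫ := by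
  obtain ⟨s, t, rfl⟩ := Submodule.mem_span_pair.mp ha
  rw [Submodule.mem_orthogonal_singleton_iff_inner_left, inner_add_right, real_inner_smul_right,
    real_inner_smul_right] at hx hy
  have hst : s ≠ 0 ∨ t ≠ 0 := by
    by_contra! h
    simp [h] at h0
  rcases hst with hs | ht
  · refine mul_left_cancel₀ hs ?_
    linear_combination ⟪y, v⟫ * hx - ⟪x, v⟫ * hy
  · refine mul_left_cancel₀ ht ?_
    linear_combination ⟪x, r⟫ * hy - ⟪y, r⟫ * hx

/-- The Laplace–Runge–Lenz vector of the Kepler problem in a real inner product space, with the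
double cross product `v × (r × v)` expanded as `‖v‖² r - ⟪r, v⟫ v`. -/
def rungeLenz (κ : ℝ) (p : E × E) : E :=
  (‖p.2‖ ^ 2 - κ / ‖p.1‖) • p.1 - ⟪p.1, p.2⟫ • p.2

lemma rungeLenz_mem_span (κ : ℝ) (r v : E) :
    rungeLenz κ (r, v) ∈ Submodule.span ℝ {r, v} :=
  Submodule.mem_span_pair.mpr ⟨‖v‖ ^ 2 - κ / ‖r‖, -⟪r, v⟫, by
    rw [neg_smul, ← sub_eq_add_neg, rungeLenz]⟩

lemma inner_rungeLenz (κ : ℝ) (x r v : E) :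
    ⟪x, rungeLenz κ (r, v)⟫ = (‖v‖ ^ 2 - κ / ‖r‖) * ⟪x, r⟫ - ⟪r, v⟫ * ⟪x, v⟫ := by
  simp only [rungeLenz, inner_sub_right, real_inner_smul_right]

lemma differentiableAt_rungeLenz_left (κ : ℝ) {r : E} (hr : r ≠ 0) (v : E) :
    DifferentiableAt ℝ (fun q => rungeLenz κ (q, v)) r := by
  simp only [rungeLenz, div_eq_mul_inv]
  exact ((((hasFDerivAt_norm_inv hr).differentiableAt.const_mul κ).const_sub _).smul
    differentiableAt_id).sub ((differentiableAt_id.inner ℝ (differentiableAt_const v)).smul_const v)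

lemma differentiableAt_rungeLenz_right (κ : ℝ) (r v : E) :
    DifferentiableAt ℝ (fun w => rungeLenz κ (r, w)) v := by
  simp only [rungeLenz]
  exact ((differentiableAt_id.norm_sq ℝ |>.sub_const _).smul_const r).sub
    (((differentiableAt_const r).inner ℝ differentiableAt_id).smul differentiableAt_id)

variable [CompleteSpace E]

lemma gradient_inner_normalize {f : E → F} {p : E} (hf : DifferentiableAt ℝ f p) (h0 : f p ≠ 0)
    (x : F) :
    ∇ (fun q => ⟪x, normalize (f q)⟫) p =
      ‖f p‖⁻¹ • ∇ (fun q => ⟪(ℝ ∙ f p)ᗮ.starProjection x, f q⟫) p := by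
  have hΘ : HasFDerivAt (fun q => normalize (f q)) _ p :=
    (hasFDerivAt_normalize h0).comp p hf.hasFDerivAt
  refine ext_inner_right ℝ fun h => ?_
  rw [inner_gradient_left, real_inner_smul_left, inner_gradient_left,
    fderiv_inner_apply ℝ (differentiableAt_const _) hΘ.differentiableAt,
    fderiv_inner_apply ℝ (differentiableAt_const _) hf, hΘ.fderiv]
  simp only [fderiv_fun_const, Pi.zero_apply, zero_apply, inner_zero_left,
    add_zero, ContinuousLinearMap.comp_apply, smul_apply,
    real_inner_smul_right, Submodule.inner_starProjection_left_eq_right]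

lemma gradient_inner_rungeLenz_left (κ : ℝ) {r : E} (hr : r ≠ 0) (v x : E) :
    ∇ (fun q => ⟪x, rungeLenz κ (q, v)⟫) r =
      (‖v‖ ^ 2 - κ / ‖r‖) • x + (κ / ‖r‖ ^ 3 * ⟪x, r⟫) • r - ⟪x, v⟫ • v := by
  simp only [inner_rungeLenz, div_eq_mul_inv, real_inner_comm v]
  have hpot := ((hasFDerivAt_norm_inv hr).const_mul κ).const_sub (‖v‖ ^ 2)
  refine HasGradientAt.gradient (HasFDerivAt.congr_fderiv
    ((hpot.mul (innerSL ℝ x).hasFDerivAt).sub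
      ((innerSL ℝ v).hasFDerivAt.mul_const _)) ?_)
  ext h
  simp only [coe_innerSL_apply, inv_pow, neg_smul, smul_neg, neg_neg, sub_apply, add_apply,
    smul_apply, smul_eq_mul, map_sub, map_add, map_smul, InnerProductSpace.toDual_apply_apply,
    sub_left_inj, add_right_inj]
  ring

lemma gradient_inner_rungeLenz_right (κ : ℝ) (r v x : E) :
    ∇ (fun w => ⟪x, rungeLenz κ (r, w)⟫) v =
      (2 * ⟪x, r⟫) • v - ⟪x, v⟫ • r - ⟪r, v⟫ • x := by
  simp only [inner_rungeLenz]
  refine HasGradientAt.gradient (HasFDerivAt.congr_fderiv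
    ((((hasStrictFDerivAt_norm_sq v).hasFDerivAt.sub_const _).mul_const _).sub
      ((innerSL ℝ r).hasFDerivAt.mul (innerSL ℝ x).hasFDerivAt)) ?_)
  ext h
  simp only [coe_innerSL_apply, sub_apply, smul_apply, nsmul_eq_mul, Nat.cast_ofNat, smul_eq_mul,
    add_apply, map_sub, map_smul, InnerProductSpace.toDual_apply_apply]
  ring

/-- The canonical Poisson bracket on the phase space `E × E`, whose points are the pairs
`(r, v)` of a position and a velocity. -/
def poissonBracket (G H : E × E → ℝ) (p : E × E) : ℝ :=
  ⟪∇ (fun r => G (r, p.2)) p.1, ∇ (fun v => H (p.1, v)) p.2⟫ -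
    ⟪∇ (fun r => H (r, p.2)) p.1, ∇ (fun v => G (p.1, v)) p.2⟫

lemma poissonBracket_inner_normalize {f : E × E → F} {p : E × E}
    (hr : DifferentiableAt ℝ (fun r => f (r, p.2)) p.1)
    (hv : DifferentiableAt ℝ (fun v => f (p.1, v)) p.2) (h0 : f p ≠ 0) (x y : F) :
    poissonBracket (fun q => ⟪x, normalize (f q)⟫) (fun q => ⟪y, normalize (f q)⟫) p =
      ‖f p‖⁻¹ ^ 2 * poissonBracket (fun q => ⟪(ℝ ∙ f p)ᗮ.starProjection x, f q⟫)
        (fun q => ⟪(ℝ ∙ f p)ᗮ.starProjection y, f q⟫) p := by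
  simp only [poissonBracket, gradient_inner_normalize hr h0, gradient_inner_normalize hv h0,
    real_inner_smul_left, real_inner_smul_right]
  ring

lemma poissonBracket_inner_rungeLenz (κ : ℝ) {r : E} (hr : r ≠ 0) (v x y : E) :
    poissonBracket (fun p => ⟪x, rungeLenz κ p⟫) (fun p => ⟪y, rungeLenz κ p⟫) (r, v) =
      (2 * (κ / ‖r‖) - ‖v‖ ^ 2) * (⟪x, r⟫ * ⟪y, v⟫ - ⟪y, r⟫ * ⟪x, v⟫) := by
  have hn : ‖r‖ ≠ 0 := norm_ne_zero_iff.mpr hr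
  simp only [poissonBracket, gradient_inner_rungeLenz_left κ hr, gradient_inner_rungeLenz_right,
    inner_add_left, inner_sub_left, inner_sub_right, real_inner_smul_left, real_inner_smul_right,
    real_inner_self_eq_norm_sq, real_inner_comm r v, real_inner_comm x r,
    real_inner_comm x v, real_inner_comm y r, real_inner_comm y v, real_inner_comm x y]
  field_simp
  ring

theorem poisson_lrlDir_lrlDir_general (κ : ℝ) {r v : E} (hr : r ≠ 0)
    (hA : rungeLenz κ (r, v) ≠ 0) (x y : E) :
    poissonBracket (fun p => ⟪x, normalize (rungeLenz κ p)⟫)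
      (fun p => ⟪y, normalize (rungeLenz κ p)⟫) (r, v) = 0 := by
  rw [poissonBracket_inner_normalize (differentiableAt_rungeLenz_left κ hr v)
    (differentiableAt_rungeLenz_right κ r v) hA, poissonBracket_inner_rungeLenz κ hr,
    inner_mul_inner_eq_of_mem_orthogonal (rungeLenz_mem_span κ r v) hA
      (Submodule.starProjection_apply_mem _ x) (Submodule.starProjection_apply_mem _ y),
    sub_self, mul_zero, mul_zero]

end InnerProductSpace

lemma dot_eq_inner (a b : E3) : dot a b = inner ℝ a b := by
  simp [dot, PiLp.inner_apply, mul_comm]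

lemma pb_eq_poissonBracket (F G : E3 × E3 → ℝ) (p : E3 × E3) :
    pb F G p = poissonBracket F G p := by
  simp only [pb, dot_eq_inner, gradR, gradV, poissonBracket]

lemma cross_cross_self (r v : E3) : cross v (cross r v) = ‖v‖ ^ 2 • r - inner ℝ r v • v := by
  ext i
  fin_cases i <;>
    simp only [cross, toE3, PiLp.continuousLinearEquiv_symm_apply, Matrix.cons_val,
      Matrix.cons_val_one, Matrix.cons_val_zero, Fin.zero_eta, Fin.mk_one, Fin.reduceFinMk,
      Fin.isValue, EuclideanSpace.real_norm_sq_eq, Fin.sum_univ_three, PiLp.inner_apply,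
      RCLike.inner_apply, Real.ringHom_apply, PiLp.sub_apply, PiLp.smul_apply, smul_eq_mul] <;>
    ring

lemma lrl_eq_rungeLenz (κ : ℝ) (p : E3 × E3) : lrl κ p = rungeLenz κ p := by
  rw [lrl, angMom, cross_cross_self, rungeLenz]
  module

lemma lrlDir_apply (κ : ℝ) (p : E3 × E3) (i : Fin 3) :
    lrlDir κ p i =
      inner ℝ (EuclideanSpace.single i 1) (NormedSpace.normalize (rungeLenz κ p)) := by
  simp [lrlDir, lrl_eq_rungeLenz, NormedSpace.normalize, EuclideanSpace.inner_single_left]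

/-- The components of the LRL direction vector Poisson-commute with one another:
`{Θ_i, Θ_j}(r,v) = 0` at points with `A(r,v) ≠ 0`. -/
theorem poisson_lrlDir_lrlDir (κ : ℝ) (hκ : 0 < κ) (i j : Fin 3)
    (r v : E3) (hr : r ≠ 0) (hA : lrl κ (r, v) ≠ 0) :
    pb (fun p => lrlDir κ p i) (fun p => lrlDir κ p j) (r, v) = 0 := by
  simp only [lrlDir_apply, pb_eq_poissonBracket]
  exact poisson_lrlDir_lrlDir_general κ hr (lrl_eq_rungeLenz κ (r, v) ▸ hA) _ _
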